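/- Let H be a connected bipartite graph with minimum degree δ(H) ≥ 2 and maximum degree Δ(H) ≥ 3. Then there exist a constant c > 0 and n₀ ∈ ℕ such that for every n ≥ n₀ there exists a bipartite n-vertex graph G with τ_H(G) ≥ c·n. -/

import Mathlib

/-!
The starting graph lives on `0, …, n - 1`. It is bipartite by parity and consists of a complete
bipartite core on the first `N` numbers and a tail in which `i` is joined to `i ± d` for `d ∈ D`,
where `D = {1, m, 3m, …, (2r - 1)m}`, `r = δ(H) - 2` and `m = 2|V(H)| + 1`. Thus `D` consists of
`δ(H) - 1` odd numbers.

*The process reaches the end* (`complete_of_stable`). Once the numbers below `k` span a complete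
bipartite graph, `k` has `δ(H) - 1` neighbours among them and can play a vertex of minimum degree
in a copy of `H` lacking one edge. So every stable graph above the starting graph is complete
bipartite, and contains an edge joining `n - 1` to `0` or `1`.

*It gets there slowly* (`bootProcess_local`). Suppose that at time `t` all edges other than those
of the tail lie below `L`. A new edge completes a copy of `H`; let `uv` be the corresponding edge
of `H`. If each component of `H - uv` containing an end of `uv` has a vertex placed below `L`, then
both ends of the new edge lie below `L + |V(H)| · max D`, since the edges of the tail are
short. So the infected region grows by a constant per step and linearly many steps are needed.

*The tail contains no such component* (`no_strip_embedding`). If it did, the largest and smallest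
numbers used would each have at most `δ(H) - 1` neighbours in the component, so they are `u` and
`v`. If `δ(H) = 2`, then `D = {1}`, and all degrees in `H` would be at most `2`. Otherwise, since
`m > |V(H)|`, some residue modulo `m` is missed; cutting there lifts the residue of a number `i` to
an integer `y` that increases by `1` along the difference `1` and is constant along the multiples
of `m`. A vertex maximizing `i - 2y` has neighbours only at `i + 1` and at `i - d` with
`d ∈ D \ {1}`, so it is again `u` or `v`; being also extremal for `i`, it has too few neighbours.
-/

open SimpleGraph

/-- The number of subgraphs of `G` isomorphic to `H`. -/
noncomputable def numCopies {α β : Type*} (H : SimpleGraph α) (G : SimpleGraph β) : ℕ :=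
  {G' : G.Subgraph | Nonempty (G'.coe ≃g H)}.ncard

/-- One step of the `H`-bootstrap process: add every missing edge whose addition
creates a new copy of `H`. -/
noncomputable def bootStep {α β : Type*} (H : SimpleGraph α) (G : SimpleGraph β) :
    SimpleGraph β :=
  G ⊔ SimpleGraph.fromRel (fun u v =>
    numCopies H G < numCopies H (G ⊔ SimpleGraph.fromEdgeSet {s(u, v)}))

/-- The `H`-bootstrap process `(G_i)_{i ≥ 0}` on the starting graph `G`. -/
noncomputable def bootProcess {α β : Type*} (H : SimpleGraph α) (G : SimpleGraph β) :
    ℕ → SimpleGraph β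
  | 0 => G
  | i + 1 => bootStep H (bootProcess H G i)

/-- The running time `τ_H(G)` of the `H`-bootstrap process on `G`. -/
noncomputable def runningTime {α β : Type*} (H : SimpleGraph α) (G : SimpleGraph β) : ℕ :=
  sInf {t | bootProcess H G t = bootProcess H G (t + 1)}

/-- `M_H(n)`, the maximum running time of the `H`-bootstrap process over all
`n`-vertex starting graphs. -/
noncomputable def maxRunningTime {α : Type*} (H : SimpleGraph α) (n : ℕ) : ℕ :=
  sSup {t | ∃ G : SimpleGraph (Fin n), runningTime H G = t}

/-! ### Copies of `H` and single steps of the process -/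

section Bootstrap

variable {α β : Type*}

theorem numCopies_eq (H : SimpleGraph α) (G : SimpleGraph β) :
    numCopies H G = (Set.range (Copy.toSubgraph (A := H) (B := G))).ncard := by
  rw [Copy.range_toSubgraph, numCopies]
  congr 1
  ext G'
  exact ⟨fun ⟨e⟩ => ⟨e.symm⟩, fun ⟨e⟩ => ⟨e.symm⟩⟩

theorem map_ofLE_injective {G K : SimpleGraph β} (h : G ≤ K) :
    Function.Injective (Subgraph.map (Hom.ofLE h)) := by
  intro A B hAB
  have hv : ∀ C : G.Subgraph, (C.map (Hom.ofLE h)).verts = C.verts := fun C => by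
    simp
  have ha : ∀ C : G.Subgraph, ∀ a b, (C.map (Hom.ofLE h)).Adj a b ↔ C.Adj a b := fun C a b => by
    simp [Relation.Map]
  refine Subgraph.ext ?_ ?_
  · rw [← hv A, ← hv B, hAB]
  · ext a b
    rw [← ha A, ← ha B, hAB]

/-- If passing from `G` to `K` creates a new copy of `H`, then some copy of `H` in `K` uses an edge
outside `G`. -/
theorem exists_copy_of_numCopies_lt [Finite β] {H : SimpleGraph α} {G K : SimpleGraph β}
    (hle : G ≤ K) (hlt : numCopies H G < numCopies H K) :
    ∃ φ : Copy H K, ∃ x y, H.Adj x y ∧ ¬ G.Adj (φ x) (φ y) := by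
  by_contra! hno
  refine hlt.not_ge ?_
  rw [numCopies_eq, numCopies_eq, ← Set.ncard_image_of_injective _ (map_ofLE_injective hle)]
  refine Set.ncard_le_ncard ?_ (Set.toFinite _)
  rintro _ ⟨f, rfl⟩
  refine ⟨_, ⟨⟨⟨f, fun {x y} h => hno f x y h⟩, f.injective⟩, rfl⟩, ?_⟩
  dsimp only [Copy.toSubgraph]
  rw [← Subgraph.map_comp]
  rfl

theorem numCopies_lt_of_copy [Finite β] {H : SimpleGraph α} {G K : SimpleGraph β}
    (hle : G ≤ K) (φ : Copy H K) {x y : α} (hxy : H.Adj x y) (hnot : ¬ G.Adj (φ x) (φ y)) :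
    numCopies H G < numCopies H K := by
  rw [numCopies_eq, numCopies_eq, ← Set.ncard_image_of_injective _ (map_ofLE_injective hle)]
  refine Set.ncard_lt_ncard ?_ (Set.toFinite _)
  refine (Set.ssubset_iff_of_subset ?_).2 ⟨φ.toSubgraph, ⟨φ, rfl⟩, ?_⟩
  · rintro _ ⟨_, ⟨f, rfl⟩, rfl⟩
    refine ⟨(Copy.ofLE G K hle).comp f, ?_⟩
    dsimp only [Copy.toSubgraph]
    rw [← Subgraph.map_comp]
    rfl
  · rintro ⟨G', -, hG'⟩
    have h1 : φ.toSubgraph.Adj (φ x) (φ y) := ⟨x, y, hxy, rfl, rfl⟩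
    rw [← hG'] at h1
    obtain ⟨a, b, hab, ha, hb⟩ := h1
    apply hnot
    rw [← ha, ← hb]
    exact hab.adj_sub

theorem le_bootStep (H : SimpleGraph α) (G : SimpleGraph β) : G ≤ bootStep H G := le_sup_left

/-- A newly added edge is the image of a single edge of some injectively embedded `H`, all of
whose other edges were already present. -/
theorem exists_of_bootStep_adj [Finite β] {H : SimpleGraph α} {G : SimpleGraph β} {a b : β}
    (h : (bootStep H G).Adj a b) (hG : ¬ G.Adj a b) :
    ∃ φ : α → β, Function.Injective φ ∧ ∃ u v, H.Adj u v ∧ φ u = a ∧ φ v = b ∧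
      ∀ x y, H.Adj x y → s(x, y) ≠ s(u, v) → G.Adj (φ x) (φ y) := by
  have hlt : numCopies H G < numCopies H (G ⊔ SimpleGraph.fromEdgeSet {s(a, b)}) := by
    rcases h with h | h
    · exact absurd h hG
    · rcases h.2 with h | h
      · exact h
      · rwa [Sym2.eq_swap]
  obtain ⟨φ, u, v, huv, hnot⟩ := exists_copy_of_numCopies_lt le_sup_left hlt
  have key : ∀ x y, H.Adj x y → ¬ G.Adj (φ x) (φ y) → s(φ x, φ y) = s(a, b) := by
    intro x y hxy hn
    rcases φ.toHom.map_adj hxy with h' | h'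
    · exact absurd h' hn
    · exact ((fromEdgeSet_adj _).1 h').1
  have huv' := key u v huv hnot
  have hrest : ∀ x y, H.Adj x y → s(x, y) ≠ s(u, v) → G.Adj (φ x) (φ y) := by
    intro x y hxy hne
    by_contra hn
    have h1 := (key x y hxy hn).trans huv'.symm
    apply hne
    exact Sym2.map.injective φ.injective h1
  rcases Sym2.eq_iff.1 huv' with ⟨h1, h2⟩ | ⟨h1, h2⟩
  · exact ⟨φ, φ.injective, u, v, huv, h1, h2, hrest⟩
  · refine ⟨φ, φ.injective, v, u, huv.symm, h2, h1, fun x y hxy hne => hrest x y hxy ?_⟩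
    rwa [Sym2.eq_swap (a := u)]

/-- If the process has stopped at `G`, then any injective map of `H` sending all edges but one
to edges of `G` sends the last one to an edge of `G` as well. -/
theorem adj_of_stable [Finite β] {H : SimpleGraph α} {G : SimpleGraph β}
    (hst : bootStep H G ≤ G) {φ : α → β} (hφ : Function.Injective φ) {u v : α} (huv : H.Adj u v)
    (hrest : ∀ x y, H.Adj x y → s(φ x, φ y) = s(φ u, φ v) ∨ G.Adj (φ x) (φ y)) :
    G.Adj (φ u) (φ v) := by
  by_contra hnot
  have hne : φ u ≠ φ v := fun h => huv.ne (hφ h)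
  refine hnot (hst (Or.inr ((fromRel_adj _ _ _).2 ⟨hne, Or.inl ?_⟩)))
  let f : Copy H (G ⊔ SimpleGraph.fromEdgeSet {s(φ u, φ v)}) := by
    refine ⟨⟨φ, fun {x y} hxy => ?_⟩, hφ⟩
    rcases hrest x y hxy with h | h
    · exact Or.inr ((fromEdgeSet_adj _).2 ⟨h, fun h => hxy.ne (hφ h)⟩)
    · exact Or.inl h
  exact numCopies_lt_of_copy le_sup_left f huv hnot

theorem bootProcess_mono (H : SimpleGraph α) (G : SimpleGraph β) :
    Monotone (bootProcess H G) :=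
  monotone_nat_of_le_succ fun i => le_bootStep H (bootProcess H G i)

/-- At the running time, the process has stopped. -/
theorem bootStep_runningTime_le [Finite β] (H : SimpleGraph α) (G : SimpleGraph β) :
    bootStep H (bootProcess H G (runningTime H G)) ≤ bootProcess H G (runningTime H G) := by
  have hne : {t | bootProcess H G t = bootProcess H G (t + 1)}.Nonempty := by
    obtain ⟨t, ht⟩ := WellFoundedGT.monotone_chain_condition
      (⟨bootProcess H G, bootProcess_mono H G⟩ : ℕ →o SimpleGraph β)
    exact ⟨t, ht (t + 1) (Nat.le_succ t)⟩
  exact (Nat.sInf_mem hne).ge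

end Bootstrap

/-! ### The tail contains no copy of `H` minus an edge -/

section Strip

variable {V : Type*} [Fintype V] {H : SimpleGraph V}

/-- If the neighbours of `w` in `H` minus the edge `uv` are mapped into `F`, then the degree of `w`
in `H` is at most `|F|`, plus one if `w` is an end of `uv`. -/
theorem ncard_neighborSet_le {f : V → ℤ} (hf : Function.Injective f) {u v w : V} {F : Finset ℤ}
    (hF : ∀ x, H.Adj w x → s(w, x) ≠ s(u, v) → f x ∈ F) :
    (H.neighborSet w).ncard ≤ F.card + 1 ∧
      (w ≠ u → w ≠ v → (H.neighborSet w).ncard ≤ F.card) := by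
  classical
  have h1 : ({x | H.Adj w x ∧ s(w, x) ≠ s(u, v)} : Set V).ncard ≤ F.card := by
    rw [← Set.ncard_coe_finset F]
    exact Set.ncard_le_ncard_of_injOn f (fun x hx => hF x hx.1 hx.2) hf.injOn (Set.toFinite _)
  have h2 : ({x | s(w, x) = s(u, v)} : Set V).ncard ≤ 1 := by
    rw [Set.ncard_le_one (Set.toFinite _)]
    intro a ha b hb
    exact Sym2.congr_right.1 ((show s(w, a) = s(u, v) from ha).trans
      (show s(w, b) = s(u, v) from hb).symm)
  constructor
  · have hsub : H.neighborSet w ⊆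
        {x | H.Adj w x ∧ s(w, x) ≠ s(u, v)} ∪ {x | s(w, x) = s(u, v)} := by
      intro x hx
      by_cases h : s(w, x) = s(u, v)
      · exact Or.inr h
      · exact Or.inl ⟨hx, h⟩
    have h3 := Set.ncard_le_ncard hsub (Set.toFinite _)
    have h4 := Set.ncard_union_le {x | H.Adj w x ∧ s(w, x) ≠ s(u, v)} {x | s(w, x) = s(u, v)}
    omega
  · intro hu hv
    refine le_trans (Set.ncard_le_ncard ?_ (Set.toFinite _)) h1
    intro x hx
    refine ⟨hx, fun h => ?_⟩
    rcases Sym2.eq_iff.1 h with ⟨h, -⟩ | ⟨h, -⟩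
    · exact hu h
    · exact hv h

/-- No nonempty union `S` of components of `H` minus the edge `uv` embeds into the graph on `ℤ`
that joins integers differing by `1` or by an element of `E`, when `E` consists of at most
`δ(H) - 2` positive multiples of some `m > |V(H)|`. -/
theorem no_strip_embedding (hconn : H.Connected) {m : ℤ} (hm : (Fintype.card V : ℤ) < m)
    {E : Finset ℤ} (hE : ∀ d ∈ E, 0 < d ∧ m ∣ d)
    (hdeg : ∀ w, E.card + 2 ≤ (H.neighborSet w).ncard)
    (hmax : ∃ w, 3 ≤ (H.neighborSet w).ncard)
    {f : V → ℤ} (hf : Function.Injective f) {u v : V} {S : Finset V} (hS : S.Nonempty)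
    (hcl : ∀ w ∈ S, ∀ x, H.Adj w x → s(w, x) ≠ s(u, v) →
      x ∈ S ∧ ∃ d ∈ insert 1 E, f x = f w + d ∨ f w = f x + d) : False := by
  classical
  have hpos : ∀ d ∈ insert 1 E, 0 < d := by
    intro d hd
    rcases Finset.mem_insert.1 hd with rfl | hd
    · exact one_pos
    · exact (hE d hd).1
  have hcard : (insert 1 E).card ≤ E.card + 1 := Finset.card_insert_le _ _
  -- The leftmost and the rightmost vertex of `S` have too few neighbours.
  obtain ⟨p, hpS, hp⟩ := S.exists_max_image f hS
  obtain ⟨q, hqS, hq⟩ := S.exists_min_image f hS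
  have hpn : ∀ x, H.Adj p x → s(p, x) ≠ s(u, v) → ∃ d ∈ insert 1 E, f p = f x + d := by
    intro x hx hne
    obtain ⟨hxS, d, hd, h⟩ := hcl p hpS x hx hne
    have := hp x hxS
    have := hpos d hd
    exact ⟨d, hd, by omega⟩
  have hqn : ∀ x, H.Adj q x → s(q, x) ≠ s(u, v) → ∃ d ∈ insert 1 E, f x = f q + d := by
    intro x hx hne
    obtain ⟨hxS, d, hd, h⟩ := hcl q hqS x hx hne
    have := hq x hxS
    have := hpos d hd
    exact ⟨d, hd, by omega⟩
  have hpuv : p = u ∨ p = v := by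
    by_contra! hn
    have h1 := (ncard_neighborSet_le (w := p) (u := u) (v := v) hf
      (F := (insert 1 E).image (f p - ·)) (fun x hx hne => by
        obtain ⟨d, hd, h⟩ := hpn x hx hne
        exact Finset.mem_image.2 ⟨d, hd, by omega⟩)).2 hn.1 hn.2
    have h2 := hdeg p
    have h3 : ((insert 1 E).image (f p - ·)).card ≤ _ := Finset.card_image_le
    omega
  have hquv : q = u ∨ q = v := by
    by_contra! hn
    have h1 := (ncard_neighborSet_le (w := q) (u := u) (v := v) hf
      (F := (insert 1 E).image (f q + ·)) (fun x hx hne => by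
        obtain ⟨d, hd, h⟩ := hqn x hx hne
        exact Finset.mem_image.2 ⟨d, hd, by omega⟩)).2 hn.1 hn.2
    have h2 := hdeg q
    have h3 : ((insert 1 E).image (f q + ·)).card ≤ _ := Finset.card_image_le
    omega
  have hpq : p ≠ q := by
    rintro rfl
    have h1 := (ncard_neighborSet_le (w := p) (u := u) (v := v) hf (F := ∅) (fun x hx hne => by
      obtain ⟨d, hd, h⟩ := hpn x hx hne
      have := hq x (hcl p hpS x hx hne).1
      have := hpos d hd
      omega)).1
    have h2 := hdeg p
    rw [Finset.card_empty] at h1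
    omega
  rcases Finset.eq_empty_or_nonempty E with rfl | hEne
  -- All differences are `1`, so no vertex of `S` has more than two neighbours.
  · have huS : u ∈ S := by
      rcases hpuv with rfl | rfl
      · exact hpS
      · rcases hquv with rfl | rfl
        · exact hqS
        · exact absurd rfl hpq
    have hvS : v ∈ S := by
      rcases hpuv with rfl | rfl
      · rcases hquv with rfl | rfl
        · exact absurd rfl hpq
        · exact hqS
      · exact hpS
    have hall : ∀ w x, H.Walk w x → w ∈ S → x ∈ S := by
      intro w x W
      induction W with
      | nil => exact id
      | @cons a b _ h _ ih =>
        intro ha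
        apply ih
        by_cases hne : s(a, b) = s(u, v)
        · rcases Sym2.eq_iff.1 hne with ⟨-, rfl⟩ | ⟨-, rfl⟩
          · exact hvS
          · exact huS
        · exact (hcl a ha b h hne).1
    obtain ⟨w, hw⟩ := hmax
    obtain ⟨W⟩ := hconn.preconnected u w
    have hwS := hall u w W huS
    by_cases hwp : w = p
    · subst hwp
      have h1 := (ncard_neighborSet_le (w := w) (u := u) (v := v) hf (F := {f w - 1})
        (fun x hx hne => by
          obtain ⟨d, hd, h⟩ := hpn x hx hne
          simp at hd ⊢
          omega)).1
      simp at h1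
      omega
    by_cases hwq : w = q
    · subst hwq
      have h1 := (ncard_neighborSet_le (w := w) (u := u) (v := v) hf (F := {f w + 1})
        (fun x hx hne => by
          obtain ⟨d, hd, h⟩ := hqn x hx hne
          simp at hd ⊢
          omega)).1
      simp at h1
      omega
    · have hwu : w ≠ u := by rintro rfl; grind
      have hwv : w ≠ v := by rintro rfl; grind
      have h1 := (ncard_neighborSet_le (w := w) (u := u) (v := v) hf (F := {f w + 1, f w - 1})
        (fun x hx hne => by
          obtain ⟨-, d, hd, h⟩ := hcl w hwS x hx hne
          simp at hd ⊢
          omega)).2 hwu hwv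
      have h2 : ({f w + 1, f w - 1} : Finset ℤ).card ≤ 2 := Finset.card_le_two
      omega
  -- A residue modulo `m` is missed by `f`; cutting there lifts residues to integers.
  · have hm0 : 0 < m := lt_of_le_of_lt (Int.natCast_nonneg _) hm
    obtain ⟨z, hz⟩ : ∃ z : ℤ, ∀ w, (f w - z) % m ≠ 0 := by
      have hlt : (Finset.univ.image (fun w => f w % m)).card < (Finset.Ico 0 m).card := by
        have h1 : (Finset.univ.image (fun w => f w % m)).card ≤ Fintype.card V :=
          Finset.card_image_le
        rw [Int.card_Ico]
        omega
      obtain ⟨z, hz, hz'⟩ := Finset.exists_mem_notMem_of_card_lt_card hlt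
      refine ⟨z, fun w hw => hz' (Finset.mem_image.2 ⟨w, Finset.mem_univ _, ?_⟩)⟩
      have hz2 := Finset.mem_Ico.1 hz
      have h3 : f w % m = z % m := (Int.emod_eq_emod_iff_emod_sub_eq_zero).2 hw
      rw [h3]
      exact Int.emod_eq_of_lt hz2.1 hz2.2
    set y : V → ℤ := fun w => (f w - z) % m with hy
    have hy1 : ∀ w x, f x = f w + 1 → y x = y w + 1 := by
      intro w x h
      have h1 := hz x
      have h2 := Int.emod_nonneg (f w - z) hm0.ne'
      have h3 := Int.emod_lt_of_pos (f w - z) hm0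
      have h4 : (f x - z) % m = ((f w - z) % m + 1) % m := by
        rw [h, Int.emod_add_emod]
        congr 1
        ring
      rw [h4] at h1
      simp only [hy]
      rw [h4]
      refine Int.emod_eq_of_lt (by omega) (lt_of_le_of_ne (by omega) fun h5 => h1 ?_)
      rw [h5, Int.emod_self]
    have hyE : ∀ w x, ∀ d ∈ E, f x = f w + d → y x = y w := by
      intro w x d hd h
      obtain ⟨k, rfl⟩ := (hE d hd).2
      simp only [hy]
      rw [h, show f w + m * k - z = f w - z + m * k by ring, Int.add_mul_emod_self_left]
    -- The functional `f - 2 y` increases along `E` and decreases along `1`.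
    obtain ⟨w, hwS, hw⟩ := S.exists_max_image (fun w => f w - 2 * y w) hS
    have hwn : ∀ x, H.Adj w x → s(w, x) ≠ s(u, v) → f x = f w + 1 ∨ ∃ d ∈ E, f x = f w - d := by
      intro x hx hne
      obtain ⟨hxS, d, hd, h⟩ := hcl w hwS x hx hne
      have hle := hw x hxS
      rcases Finset.mem_insert.1 hd with rfl | hd
      · rcases h with h | h
        · exact Or.inl h
        · have := hy1 x w h
          omega
      · rcases h with h | h
        · have := hyE w x d hd h
          have := (hE d hd).1
          omega
        · exact Or.inr ⟨d, hd, by omega⟩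
    have hwuv : w = u ∨ w = v := by
      by_contra! hn
      have h1 := (ncard_neighborSet_le (w := w) (u := u) (v := v) hf
        (F := insert (f w + 1) (E.image (f w - ·))) (fun x hx hne => by
          rcases hwn x hx hne with h | ⟨d, hd, h⟩
          · exact Finset.mem_insert.2 (Or.inl h)
          · exact Finset.mem_insert.2 (Or.inr (Finset.mem_image.2 ⟨d, hd, h.symm⟩)))).2 hn.1 hn.2
      have h2 := hdeg w
      have h3 : (E.image (f w - ·)).card ≤ _ := Finset.card_image_le
      have h4 := Finset.card_insert_le (f w + 1) (E.image (f w - ·))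
      omega
    have hwpq : w = p ∨ w = q := by grind
    have hEc := hEne.card_pos
    rcases hwpq with rfl | rfl
    · have h1 := (ncard_neighborSet_le (w := w) (u := u) (v := v) hf
        (F := E.image (f w - ·)) (fun x hx hne => by
          rcases hwn x hx hne with h | ⟨d, hd, h⟩
          · have := hp x (hcl w hwS x hx hne).1
            omega
          · exact Finset.mem_image.2 ⟨d, hd, h.symm⟩)).1
      have h2 := hdeg w
      have h3 : (E.image (f w - ·)).card ≤ _ := Finset.card_image_le
      omega
    · have h1 := (ncard_neighborSet_le (w := w) (u := u) (v := v) hf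
        (F := {f w + 1}) (fun x hx hne => by
          rcases hwn x hx hne with h | ⟨d, hd, h⟩
          · simp [h]
          · have := hq x (hcl w hwS x hx hne).1
            have := (hE d hd).1
            omega)).1
      have h2 := hdeg w
      simp at h1
      omega

end Strip

/-! ### The starting graph -/

section Construction

/-- The vertices `0, …, n - 1`, where numbers of different parity are joined if both are less
than `N` or if their difference lies in `D`: a complete bipartite core with a tail attached. -/
def coreStrip (D : Finset ℕ) (N n : ℕ) : SimpleGraph (Fin n) where
  Adj i j := i.val % 2 ≠ j.val % 2 ∧
    ((i.val < N ∧ j.val < N) ∨ ∃ d ∈ D, j.val = i.val + d ∨ i.val = j.val + d)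
  symm := ⟨fun _ _ h => ⟨h.1.symm, h.2.imp (fun h => ⟨h.2, h.1⟩)
    (fun ⟨d, hd, h⟩ => ⟨d, hd, h.symm⟩)⟩⟩
  loopless := ⟨fun _ h => h.1 rfl⟩

theorem coreStrip_colorable (D : Finset ℕ) (N n : ℕ) : (coreStrip D N n).Colorable 2 :=
  ⟨Coloring.mk (fun i => ⟨i.val % 2, Nat.mod_lt _ two_pos⟩)
    (fun {_ _} h h' => h.1 (congrArg Fin.val h'))⟩

/-- If every edge of `H'` is sent below `L` or to a pair at distance at most `B`, then along a walk
that starts below `K ≥ L` the image moves past `K` by at most `B` per step. -/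
theorem walk_bound {V : Type*} {n B L : ℕ} {D : Finset ℕ} (hB : ∀ d ∈ D, d ≤ B) {φ : V → Fin n}
    {H' : SimpleGraph V}
    (hφ : ∀ x y, H'.Adj x y → ((φ x).val < L ∧ (φ y).val < L) ∨
      ∃ d ∈ D, (φ y).val = (φ x).val + d ∨ (φ x).val = (φ y).val + d)
    {w x : V} (W : H'.Walk w x) :
    ∀ K, L ≤ K → (φ w).val < K → (φ x).val < K + W.length * B := by
  induction W with
  | nil => intro K _ h; simpa using h
  | @cons a b c h W ih =>
    intro K hK ha
    have hb : (φ b).val < K + B := by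
      rcases hφ a b h with h | ⟨d, hd, h⟩
      · omega
      · have := hB d hd
        omega
    have := ih (K + B) (by omega) hb
    rw [Walk.length_cons, add_mul, one_mul]
    omega

variable {V : Type*} [Fintype V] {H : SimpleGraph V}

/-- The infected region grows by a bounded distance in each step: at time `t`, every edge either
lies below a bound linear in `t` or joins vertices at a difference in `D = {1} ∪ E`. -/
theorem bootProcess_local (hconn : H.Connected) {m : ℕ} (hm : Fintype.card V < m)
    {E : Finset ℕ} (hE : ∀ d ∈ E, 0 < d ∧ m ∣ d)
    (hdeg : ∀ w, E.card + 2 ≤ (H.neighborSet w).ncard)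
    (hmax : ∃ w, 3 ≤ (H.neighborSet w).ncard)
    {B : ℕ} (hB : ∀ d ∈ insert 1 E, d ≤ B) (N n t : ℕ) :
    ∀ a b, (bootProcess H (coreStrip (insert 1 E) N n) t).Adj a b →
      (a.val < N + t * (Fintype.card V * B) ∧ b.val < N + t * (Fintype.card V * B)) ∨
        ∃ d ∈ insert 1 E, b.val = a.val + d ∨ a.val = b.val + d := by
  classical
  induction t with
  | zero =>
    intro a b h
    simpa using h.2
  | succ t ih =>
    intro a b h
    by_cases hG : (bootProcess H (coreStrip (insert 1 E) N n) t).Adj a b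
    · refine (ih a b hG).imp_left fun h => ?_
      rw [add_mul]
      omega
    obtain ⟨φ, hφ, u, v, huv, rfl, rfl, hrest⟩ := exists_of_bootStep_adj h hG
    left
    set L := N + t * (Fintype.card V * B) with hL
    set H' := H.deleteEdges {s(u, v)} with hH'
    have hadj : ∀ x y, H'.Adj x y → ((φ x).val < L ∧ (φ y).val < L) ∨
        ∃ d ∈ insert 1 E, (φ y).val = (φ x).val + d ∨ (φ x).val = (φ y).val + d := by
      intro x y hxy
      rw [hH', deleteEdges_adj] at hxy
      exact ih _ _ (hrest x y hxy.1 hxy.2)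
    -- The component of `c` in `H` minus `uv` meets the region below `L`.
    have key : ∀ c, (φ c).val < L + Fintype.card V * B := by
      intro c
      have hex : ∃ w, H'.Reachable w c ∧ (φ w).val < L := by
        by_contra! hno
        refine no_strip_embedding hconn (m := m) (by exact_mod_cast hm)
          (E := E.map Nat.castEmbedding) ?_ (by simpa using hdeg) hmax
          (f := fun w => ((φ w).val : ℤ)) (fun x y h => hφ (Fin.ext (Int.ofNat_inj.1 h)))
          (u := u) (v := v) (S := Finset.univ.filter fun w => H'.Reachable w c)
          ⟨c, by simp⟩ ?_
        · intro d hd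
          obtain ⟨e, he, rfl⟩ := Finset.mem_map.1 hd
          have := hE e he
          exact ⟨by simpa using this.1, by simpa using Int.natCast_dvd_natCast.2 this.2⟩
        · intro w hw x hwx hne
          have hw' : H'.Reachable w c := (Finset.mem_filter.1 hw).2
          have hwx' : H'.Adj w x := by
            rw [hH', deleteEdges_adj]
            exact ⟨hwx, hne⟩
          refine ⟨Finset.mem_filter.2 ⟨Finset.mem_univ _, hwx'.symm.reachable.trans hw'⟩, ?_⟩
          rcases hadj w x hwx' with h | ⟨d, hd, h⟩
          · have := hno w hw'
            omega
          · refine ⟨d, ?_, by omega⟩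
            rcases Finset.mem_insert.1 hd with rfl | hd
            · simp
            · exact Finset.mem_insert.2 (Or.inr (Finset.mem_map.2 ⟨d, hd, rfl⟩))
      obtain ⟨w, ⟨W⟩, hwL⟩ := hex
      have h1 := walk_bound hB hadj W.bypass L le_rfl hwL
      have h2 := W.bypass_isPath.length_lt
      have h3 : W.bypass.length * B ≤ Fintype.card V * B := Nat.mul_le_mul_right _ h2.le
      omega
    have e : N + (t + 1) * (Fintype.card V * B) = L + Fintype.card V * B := by
      rw [hL, add_mul, one_mul]
      omega
    rw [e]
    exact ⟨key u, key v⟩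

/-- Percolation: the vertex `k` has `deg v₀ - 1` smaller neighbours, so once the vertices below
`k` span a complete bipartite graph, `k` can play the role of `v₀` in a copy of `H` whose only
missing edge joins `k` to any prescribed smaller vertex of the other parity. -/
theorem complete_of_stable (C : H.Coloring (Fin 2)) {v₀ : V} {D : Finset ℕ}
    (hdeg : (H.neighborSet v₀).ncard = D.card + 1) (hodd : ∀ d ∈ D, d % 2 = 1)
    {B N n : ℕ} (hB : ∀ d ∈ D, d ≤ B) (hN : B + 4 * Fintype.card V + 4 ≤ N)
    {G : SimpleGraph (Fin n)} (hG : coreStrip D N n ≤ G) (hst : bootStep H G ≤ G) (k : ℕ) :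
    ∀ i j : Fin n, i.val < k → j.val < k → i.val % 2 ≠ j.val % 2 → G.Adj i j := by
  classical
  induction k with
  | zero => intro i j hi; omega
  | succ k ih =>
    -- By symmetry it is enough to treat the edges from `k` to smaller vertices.
    suffices hk : ∀ i j : Fin n, i.val = k → j.val < k → i.val % 2 ≠ j.val % 2 → G.Adj i j by
      intro i j hi hj hij
      by_cases h1 : i.val = k
      · exact hk i j h1 (by omega) hij
      by_cases h2 : j.val = k
      · exact (hk j i h2 (by omega) hij.symm).symm
      exact ih i j (by omega) (by omega) hij
    intro i j hi hj hij
    by_cases hkN : k < N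
    · exact hG ⟨hij, Or.inl ⟨by omega, by omega⟩⟩
    by_cases hjD : ∃ d ∈ D, i.val = j.val + d
    · obtain ⟨d, hd, h⟩ := hjD
      exact hG ⟨hij, Or.inr ⟨d, hd, Or.inr h⟩⟩
    have hkn : k < n := hi ▸ i.isLt
    set T : Finset ℕ := insert j.val (D.image (k - ·)) with hT
    have hTcard : T.card = D.card + 1 := by
      rw [hT, Finset.card_insert_of_notMem, Finset.card_image_of_injOn]
      · intro a ha b hb h
        have h1 := hB a ha
        have h2 := hB b hb
        dsimp only at h
        omega
      · intro h
        obtain ⟨d, hd, h⟩ := Finset.mem_image.1 h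
        have h1 := hB d hd
        exact hjD ⟨d, hd, by omega⟩
    have hTmem : ∀ x ∈ T, x = j.val ∨ (k - B ≤ x ∧ x < k ∧ x % 2 ≠ k % 2 ∧ ∃ d ∈ D, k = x + d) := by
      intro x hx
      rcases Finset.mem_insert.1 hx with hx | hx
      · exact Or.inl hx
      · obtain ⟨d, hd, rfl⟩ := Finset.mem_image.1 hx
        have h1 := hB d hd
        have h2 := hodd d hd
        exact Or.inr ⟨by omega, by omega, by omega, d, hd, by omega⟩
    obtain ⟨σ⟩ : Nonempty (H.neighborSet v₀ ≃ T) := by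
      refine ⟨Fintype.equivOfCardEq ?_⟩
      rw [Fintype.card_coe, hTcard, ← hdeg, ← Nat.card_coe_set_eq, Nat.card_eq_fintype_card]
    let ι := Fintype.equivFin V
    -- The other vertices of `H` go to small numbers away from `j`.
    let b : ℕ := if j.val < 2 * Fintype.card V + 2 then 2 * Fintype.card V + 2 else 0
    have hb : b % 2 = 0 ∧ b ≤ 2 * Fintype.card V + 2 ∧
        (j.val < b ∨ b + 2 * Fintype.card V + 2 ≤ j.val) := by
      dsimp only [b]
      split_ifs <;> omega
    let par : V → ℕ := fun x => (k + (C v₀).val + (C x).val) % 2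
    let φ : V → ℕ := fun x => if x = v₀ then k else
      if h : H.Adj v₀ x then (σ ⟨x, h⟩ : ℕ) else b + 2 * (ι x).val + par x
    have hφ0 : φ v₀ = k := if_pos rfl
    have hφ1 : ∀ x (h : H.Adj v₀ x), φ x = (σ ⟨x, h⟩ : ℕ) := fun x h => by
      simp only [φ]
      rw [if_neg h.ne', dif_pos h]
    have hφ2 : ∀ x, x ≠ v₀ → ¬ H.Adj v₀ x → φ x = b + 2 * (ι x).val + par x := fun x h1 h2 => by
      simp only [φ]
      rw [if_neg h1, dif_neg h2]
    have hpar : ∀ x, par x < 2 := fun x => Nat.mod_lt _ two_pos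
    have hι : ∀ x, (ι x).val < Fintype.card V := fun x => (ι x).isLt
    have hlt : ∀ x, x ≠ v₀ → φ x < k := by
      intro x hx
      by_cases h : H.Adj v₀ x
      · rw [hφ1 x h]
        rcases hTmem _ (σ ⟨x, h⟩).2 with h | h
        · omega
        · omega
      · rw [hφ2 x hx h]
        have := hpar x
        have := hι x
        omega
    have hmod : ∀ x, φ x % 2 = (k + (C v₀).val + (C x).val) % 2 := by
      intro x
      by_cases hx : x = v₀
      · subst hx
        rw [hφ0]
        omega
      by_cases h : H.Adj v₀ x
      · have h1 : (C v₀).val ≠ (C x).val := fun h' => C.valid h (Fin.ext h')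
        have h2 := (C v₀).isLt
        have h3 := (C x).isLt
        rw [hφ1 x h]
        rcases hTmem _ (σ ⟨x, h⟩).2 with h | h
        · omega
        · omega
      · rw [hφ2 x hx h]
        dsimp only [par]
        omega
    have hinj : Function.Injective φ := by
      have aux : ∀ x y, H.Adj v₀ x → y ≠ v₀ → ¬ H.Adj v₀ y → φ x ≠ φ y := by
        intro x y hx hy hy'
        rw [hφ1 x hx, hφ2 y hy hy']
        have := hpar y
        have := hι y
        rcases hTmem _ (σ ⟨x, hx⟩).2 with h | h
        · omega
        · omega
      intro x y hxy
      by_cases hx : x = v₀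
      · by_cases hy : y = v₀
        · rw [hx, hy]
        · have := hlt y hy
          rw [hx, hφ0] at hxy
          omega
      by_cases hy : y = v₀
      · have := hlt x hx
        rw [hy, hφ0] at hxy
        omega
      by_cases hx' : H.Adj v₀ x
      · by_cases hy' : H.Adj v₀ y
        · rw [hφ1 x hx', hφ1 y hy'] at hxy
          exact congrArg Subtype.val (σ.injective (Subtype.ext hxy))
        · exact absurd hxy (aux x y hx' hy hy')
      · by_cases hy' : H.Adj v₀ y
        · exact absurd hxy.symm (aux y x hy' hx hx')
        · rw [hφ2 x hx hx', hφ2 y hy hy'] at hxy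
          have := hpar x
          have := hpar y
          exact ι.injective (Fin.ext (by omega))
    have hφk : ∀ x, φ x ≤ k := by
      intro x
      by_cases hx : x = v₀
      · rw [hx, hφ0]
      · exact (hlt x hx).le
    let ψ : V → Fin n := fun x => ⟨φ x, (hφk x).trans_lt hkn⟩
    have hψ : Function.Injective ψ := fun x y h => hinj (congrArg Fin.val h)
    let w : H.neighborSet v₀ := σ.symm ⟨j.val, Finset.mem_insert_self _ _⟩
    have hw : ψ w = j := by
      apply Fin.ext
      change φ w = j.val
      rw [hφ1 w w.2]
      simp [w]
    have hv : ψ v₀ = i := Fin.ext (hφ0.trans hi.symm)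
    have hnb : ∀ x, H.Adj v₀ x → s(ψ v₀, ψ x) = s(ψ v₀, ψ w) ∨ G.Adj (ψ v₀) (ψ x) := by
      intro x hx
      rcases hTmem _ (σ ⟨x, hx⟩).2 with h | h
      · left
        rw [hw]
        congr 2
        exact Fin.ext ((hφ1 x hx).trans h)
      · right
        rw [← hφ1 x hx] at h
        obtain ⟨-, -, h1, d, hd, h2⟩ := h
        rw [hv]
        exact hG ⟨fun h => h1 (h.symm.trans (by rw [hi])), Or.inr ⟨d, hd, Or.inr (hi.trans h2)⟩⟩
    have hres := adj_of_stable hst hψ w.2 (u := v₀) (v := w) (fun x y hxy => by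
      by_cases hx : x = v₀
      · subst hx
        exact hnb y hxy
      by_cases hy : y = v₀
      · subst hy
        rw [Sym2.eq_swap]
        exact (hnb x hxy.symm).imp_right fun h => h.symm
      right
      refine ih _ _ (hlt x hx) (hlt y hy) ?_
      change φ x % 2 ≠ φ y % 2
      rw [hmod, hmod]
      have h1 : (C x).val ≠ (C y).val := fun h' => C.valid hxy (Fin.ext h')
      have h2 := (C x).isLt
      have h3 := (C y).isLt
      omega)
    rwa [hv, hw] at hres

end Construction

/-- If `H` is a connected bipartite graph with minimum degree at least 2
and maximum degree at least 3, then there is a bipartite `n`-vertex starting graph `G`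
with `τ_H(G) ≥ c·n` for all large `n`. -/
theorem bipartite_linear_lower {V : Type} [Fintype V] (H : SimpleGraph V)
    (hconn : H.Connected)
    (hbip : H.Colorable 2)
    (hmindeg : ∀ v : V, 2 ≤ (H.neighborSet v).ncard)
    (hmaxdeg : ∃ v : V, 3 ≤ (H.neighborSet v).ncard) :
    ∃ c : ℝ, 0 < c ∧ ∃ n₀ : ℕ, ∀ n : ℕ, n₀ ≤ n →
      ∃ G : SimpleGraph (Fin n), G.Colorable 2 ∧ c * n ≤ (runningTime H G : ℝ) := by
  obtain ⟨C⟩ := hbip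
  obtain ⟨v₁, hv₁⟩ := hmaxdeg
  obtain ⟨v₀, -, hv₀⟩ := Finset.univ.exists_min_image (fun v => (H.neighborSet v).ncard)
    ⟨v₁, Finset.mem_univ _⟩
  obtain ⟨r, hr⟩ : ∃ r, (H.neighborSet v₀).ncard = r + 2 :=
    ⟨(H.neighborSet v₀).ncard - 2, by have := hmindeg v₀; omega⟩
  set h := Fintype.card V with hh
  have hpos : 0 < h := Fintype.card_pos_iff.2 ⟨v₀⟩
  set m := 2 * h + 1 with hm
  let E : Finset ℕ := (Finset.range r).image fun a => m * (2 * a + 1)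
  have hmemE : ∀ d ∈ E, ∃ a < r, d = m * (2 * a + 1) := by
    intro d hd
    obtain ⟨a, ha, rfl⟩ := Finset.mem_image.1 hd
    exact ⟨a, Finset.mem_range.1 ha, rfl⟩
  have hE : ∀ d ∈ E, 0 < d ∧ m ∣ d := by
    intro d hd
    obtain ⟨a, -, rfl⟩ := hmemE d hd
    exact ⟨by positivity, dvd_mul_right _ _⟩
  have hEcard : E.card = r := by
    rw [Finset.card_image_of_injective, Finset.card_range]
    intro a b hab
    have := Nat.eq_of_mul_eq_mul_left (by omega) hab
    omega
  have h1E : 1 ∉ E := by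
    intro h1
    have := Nat.le_of_dvd one_pos (hE 1 h1).2
    omega
  set B := m * (2 * r + 1) with hBdef
  have hB : ∀ d ∈ insert 1 E, d ≤ B := by
    intro d hd
    rcases Finset.mem_insert.1 hd with rfl | hd
    · exact Nat.succ_le_of_lt (by positivity)
    · obtain ⟨a, ha, rfl⟩ := hmemE d hd
      exact Nat.mul_le_mul_left _ (by omega)
  have hBpos : 0 < B := by positivity
  have hodd : ∀ d ∈ insert 1 E, d % 2 = 1 := by
    intro d hd
    rcases Finset.mem_insert.1 hd with rfl | hd
    · rfl
    · obtain ⟨a, ha, rfl⟩ := hmemE d hd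
      rw [Nat.mul_mod, show m % 2 = 1 by omega, show (2 * a + 1) % 2 = 1 by omega]
  have hdeg : ∀ w, E.card + 2 ≤ (H.neighborSet w).ncard := by
    intro w
    rw [hEcard, ← hr]
    exact hv₀ w (Finset.mem_univ _)
  set N := B + 4 * h + 4 with hN
  have hhB : 0 < h * B := Nat.mul_pos hpos hBpos
  refine ⟨1 / (2 * (h * B : ℕ)), by positivity, 2 * N, fun n hn => ?_⟩
  refine ⟨coreStrip (insert 1 E) N n, coreStrip_colorable _ _ _, ?_⟩
  set t := runningTime H (coreStrip (insert 1 E) N n) with ht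
  have hst := bootStep_runningTime_le H (coreStrip (insert 1 E) N n)
  have hcomp := complete_of_stable C (v₀ := v₀) (D := insert 1 E)
    (by rw [Finset.card_insert_of_notMem h1E, hEcard, hr]) hodd hB le_rfl
    (bootProcess_mono H _ (Nat.zero_le t)) hst n
  -- The last vertex is joined in the end to one of the first two.
  have hadj := hcomp ⟨n - 1, by omega⟩ ⟨n % 2, by omega⟩ (by dsimp only; omega)
    (by dsimp only; omega) (by dsimp only; omega)
  have hloc := bootProcess_local hconn (m := m) (by omega) hE hdeg ⟨v₁, hv₁⟩ hB
    N n t _ _ hadj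
  rw [← hh] at hloc
  have hle : n ≤ N + t * (h * B) := by
    rcases hloc with hl | ⟨d, hd, hl⟩
    · have := hl.1
      dsimp only at this
      omega
    · have := hB d hd
      dsimp only at hl
      omega
  have hle2 : n ≤ t * (2 * (h * B)) := by
    rw [mul_left_comm]
    omega
  rw [one_div, inv_mul_le_iff₀ (by positivity), mul_comm]
  exact_mod_cast hle2
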